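/- arXiv:0803.0675 — 5 statements merged into one kernel-verified Lean document; each statement's English description precedes it below -/
import Mathlib

section
/- Let χ : ℝ → ℝ be a smooth function with χ(r) = 1 for 0 ≤ r ≤ 1/3 and χ(r) = 0 for r ≥ 2/3, and let γ denote the Euler–Mascheroni constant. Then there exist constants C > 0 and μ₀ > 0 such that for all real μ ≥ μ₀, | ∫₀^∞ χ(r) r^{−1} (1 − e^{−rμ}) dr − [ ln μ + γ + ∫₀^1 (χ(r) − 1) r^{−1} dr ] | ≤ C e^{−μ/4}. -/
open MeasureTheory Real

lemma aux_gamma_int : ∫ t in Set.Ioi (0:ℝ), Real.log t * Real.exp (-t) =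
    -Real.eulerMascheroniConstant := by
  have h1 := Complex.hasDerivAt_GammaIntegral (s := 1) (by simp)
  have h2 := Complex.hasDerivAt_Gamma_one
  have hopen : IsOpen {s : ℂ | 0 < s.re} := isOpen_lt continuous_const Complex.continuous_re
  have h3 : Complex.Gamma =ᶠ[nhds 1] Complex.GammaIntegral := by
    filter_upwards [hopen.mem_nhds (show (1:ℂ) ∈ {s : ℂ | 0 < s.re} by simp)] with a ha
    exact Complex.Gamma_eq_integral ha
  have h4 := (h1.congr_of_eventuallyEq h3).unique h2
  have h5 : ∫ (t : ℝ) in Set.Ioi 0, (t:ℂ) ^ ((1:ℂ) - 1) * (↑(Real.log t) * ↑(Real.exp (-t)))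
      = ((∫ t in Set.Ioi (0:ℝ), Real.log t * Real.exp (-t) : ℝ) : ℂ) := by
    rw [← integral_complex_ofReal]
    congr 1
    ext t
    simp
  rw [h5] at h4
  exact_mod_cast h4

lemma aux_gamma_integrable :
    IntegrableOn (fun t => Real.log t * Real.exp (-t)) (Set.Ioi (0:ℝ)) := by
  by_contra h
  have h1 := integral_undef h
  rw [aux_gamma_int] at h1
  have := Real.one_half_lt_eulerMascheroniConstant
  linarith

lemma aux_g_bound (t : ℝ) (ht : 0 ≤ t) : ‖(1 - Real.exp (-t)) * t⁻¹‖ ≤ 1 := by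
  rcases ht.eq_or_lt with rfl | ht
  · simp
  · have h1 : Real.exp (-t) ≤ 1 := by simpa using ht.le
    have h2 := Real.add_one_le_exp (-t)
    rw [Real.norm_of_nonneg (mul_nonneg (by linarith) (by positivity)), ← div_eq_mul_inv,
      div_le_one ht]
    linarith

lemma aux_g_meas : Measurable (fun t : ℝ => (1 - Real.exp (-t)) * t⁻¹) := by fun_prop

lemma aux_g_int (X : ℝ) (hX : 0 ≤ X) :
    IntervalIntegrable (fun t : ℝ => (1 - Real.exp (-t)) * t⁻¹) volume 0 X := by
  rw [intervalIntegrable_iff_integrableOn_Ioc_of_le hX]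
  refine Measure.integrableOn_of_bounded (M := 1) (by simp) aux_g_meas.aestronglyMeasurable ?_
  filter_upwards [ae_restrict_mem measurableSet_Ioc] with t ht
  exact aux_g_bound t ht.1.le

noncomputable def auxF (X : ℝ) : ℝ := ∫ t in (0:ℝ)..X, (1 - Real.exp (-t)) * t⁻¹

lemma auxF_deriv (X : ℝ) (hX : 0 < X) : HasDerivAt auxF ((1 - Real.exp (-X)) * X⁻¹) X := by
  refine intervalIntegral.integral_hasDerivAt_right (aux_g_int X hX.le)
    (aux_g_meas.stronglyMeasurable.stronglyMeasurableAtFilter) ?_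
  have : X ≠ 0 := hX.ne'
  fun_prop (disch := assumption)

lemma auxF_le (X : ℝ) (hX : 0 ≤ X) : ‖auxF X‖ ≤ X := by
  have := intervalIntegral.norm_integral_le_of_norm_le_const (a := 0) (b := X) (C := 1)
    (f := fun t : ℝ => (1 - Real.exp (-t)) * t⁻¹) (by
      intro t ht
      rw [Set.uIoc_of_le hX] at ht
      exact aux_g_bound t ht.1.le)
  simpa [auxF, abs_of_nonneg hX] using this

lemma auxK_deriv (X : ℝ) (hX : 0 < X) :
    HasDerivAt (fun X => (1 - Real.exp (-X)) * Real.log X - auxF X)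
      (Real.log X * Real.exp (-X)) X := by
  have h1 : HasDerivAt (fun X : ℝ => 1 - Real.exp (-X)) (Real.exp (-X)) X := by
    have := ((hasDerivAt_id X).neg.exp).const_sub 1
    simpa using this
  have := (h1.mul (Real.hasDerivAt_log hX.ne')).sub (auxF_deriv X hX)
  refine this.congr_deriv ?_
  ring

open Filter Topology

lemma auxK_zero :
    Tendsto (fun X => (1 - Real.exp (-X)) * Real.log X - auxF X) (𝓝[>] 0) (𝓝 0) := by
  have h0 : Tendsto (fun X : ℝ => |X * Real.log X| + X) (𝓝[>] 0) (𝓝 0) := by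
    have : Continuous (fun X : ℝ => |X * Real.log X| + X) :=
      Real.continuous_mul_log.abs.add continuous_id
    have h := this.tendsto 0
    simp only [zero_mul, abs_zero, add_zero] at h
    exact h.mono_left nhdsWithin_le_nhds
  refine squeeze_zero_norm' ?_ h0
  filter_upwards [self_mem_nhdsWithin] with X hX
  have hX : 0 < X := hX
  refine (norm_sub_le _ _).trans (add_le_add ?_ (auxF_le X hX.le))
  rw [Real.norm_eq_abs, abs_mul, abs_mul]
  refine mul_le_mul_of_nonneg_right ?_ (abs_nonneg _)
  have h1 : Real.exp (-X) ≤ 1 := by simpa using hX.le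
  have h2 := Real.add_one_le_exp (-X)
  rw [abs_of_nonneg (by linarith), abs_of_pos hX]
  linarith

lemma auxK_eq (X : ℝ) (hX : 0 < X) :
    ∫ t in (0:ℝ)..X, Real.log t * Real.exp (-t) = (1 - Real.exp (-X)) * Real.log X - auxF X := by
  have := intervalIntegral.integral_eq_sub_of_hasDerivAt_of_tendsto hX
    (fun x hx => auxK_deriv x hx.1)
    ((intervalIntegrable_iff_integrableOn_Ioc_of_le hX.le).2
      (aux_gamma_integrable.mono_set Set.Ioc_subset_Ioi_self))
    auxK_zero ((auxK_deriv X hX).continuousAt.tendsto.mono_left nhdsWithin_le_nhds)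
  simpa using this

lemma auxG_tendsto : Tendsto (fun X => auxF X - Real.log X) atTop
    (𝓝 Real.eulerMascheroniConstant) := by
  have h1 := intervalIntegral_tendsto_integral_Ioi 0 aux_gamma_integrable tendsto_id
  rw [aux_gamma_int] at h1
  have h2 : Tendsto (fun X : ℝ => Real.exp (-X) * Real.log X) atTop (𝓝 0) := by
    have h3 : Tendsto (fun X : ℝ => X ^ 1 * Real.exp (-X)) atTop (𝓝 0) :=
      Real.tendsto_pow_mul_exp_neg_atTop_nhds_zero 1
    refine squeeze_zero' ?_ ?_ h3
    · filter_upwards [eventually_ge_atTop 1] with X hX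
      exact mul_nonneg (Real.exp_pos _).le (Real.log_nonneg hX)
    · filter_upwards [eventually_ge_atTop 1] with X hX
      rw [pow_one, mul_comm]
      exact mul_le_mul_of_nonneg_right (Real.log_le_self (by linarith)) (Real.exp_pos _).le
  have h4 := (h1.add h2).neg
  simp only [add_zero, neg_neg] at h4
  refine h4.congr' ?_
  filter_upwards [eventually_gt_atTop 0] with X hX
  simp only [id]
  rw [auxK_eq X hX]
  ring

lemma auxG_deriv (X : ℝ) (hX : 0 < X) :
    HasDerivAt (fun X => auxF X - Real.log X) (-(Real.exp (-X) * X⁻¹)) X :=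
  ((auxF_deriv X hX).sub (Real.hasDerivAt_log hX.ne')).congr_deriv (by ring)

lemma auxG_bound (X : ℝ) (hX : 1 ≤ X) :
    |auxF X - Real.log X - Real.eulerMascheroniConstant| ≤ Real.exp (-X) := by
  have hanti : AntitoneOn (fun X => auxF X - Real.log X) (Set.Ici 1) := by
    refine antitoneOn_of_deriv_nonpos (convex_Ici 1) ?_ ?_ ?_
    · intro x hx
      exact (auxG_deriv x (lt_of_lt_of_le one_pos hx)).continuousAt.continuousWithinAt
    · intro x hx
      rw [interior_Ici] at hx
      exact (auxG_deriv x (one_pos.trans hx)).differentiableAt.differentiableWithinAt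
    · intro x hx
      rw [interior_Ici] at hx
      have hx0 : 0 < x := one_pos.trans hx
      rw [(auxG_deriv x hx0).deriv]
      have : 0 < Real.exp (-x) * x⁻¹ := by positivity
      linarith
  have hd : ∀ x : ℝ, 0 < x → HasDerivAt (fun X => auxF X - Real.log X - Real.exp (-X))
      (Real.exp (-x) * (1 - x⁻¹)) x := by
    intro x hx
    have h := (hasDerivAt_id x).neg.exp
    refine ((auxG_deriv x hx).sub h).congr_deriv ?_
    simp
    ring
  have hmono : MonotoneOn (fun X => auxF X - Real.log X - Real.exp (-X)) (Set.Ici 1) := by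
    refine monotoneOn_of_deriv_nonneg (convex_Ici 1) ?_ ?_ ?_
    · intro x hx
      exact (hd x (lt_of_lt_of_le one_pos hx)).continuousAt.continuousWithinAt
    · intro x hx
      rw [interior_Ici] at hx
      exact (hd x (one_pos.trans hx)).differentiableAt.differentiableWithinAt
    · intro x hx
      rw [interior_Ici] at hx
      have hx0 : 0 < x := one_pos.trans hx
      rw [(hd x hx0).deriv]
      have h1 : x⁻¹ ≤ 1 := inv_le_one_of_one_le₀ (le_of_lt hx)
      exact mul_nonneg (Real.exp_pos _).le (by linarith)
  have hlim2 : Tendsto (fun X => auxF X - Real.log X - Real.exp (-X)) atTop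
      (𝓝 Real.eulerMascheroniConstant) := by
    have := auxG_tendsto.sub Real.tendsto_exp_neg_atTop_nhds_zero
    simpa using this
  have hlo : Real.eulerMascheroniConstant ≤ auxF X - Real.log X := by
    refine le_of_tendsto auxG_tendsto ?_
    filter_upwards [eventually_ge_atTop X] with Y hY
    exact hanti hX (hX.trans hY) hY
  have hhi : auxF X - Real.log X - Real.exp (-X) ≤ Real.eulerMascheroniConstant := by
    refine ge_of_tendsto hlim2 ?_
    filter_upwards [eventually_ge_atTop X] with Y hY
    exact hmono hX (hX.trans hY) hY
  rw [abs_of_nonneg (by linarith)]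
  linarith

lemma auxF_scale (μ : ℝ) (hμ : 0 < μ) :
    ∫ r in Set.Ioo (0:ℝ) 1, (1 - Real.exp (-(r * μ))) * r⁻¹ = auxF μ := by
  rw [← integral_Ioc_eq_integral_Ioo, ← intervalIntegral.integral_of_le zero_le_one]
  have h := intervalIntegral.integral_comp_mul_right (a := 0) (b := 1)
    (fun t : ℝ => (1 - Real.exp (-t)) * t⁻¹) hμ.ne'
  simp only [zero_mul, one_mul, smul_eq_mul] at h
  have h2 : auxF μ = μ * ∫ x in (0:ℝ)..1, (1 - Real.exp (-(x * μ))) * (x * μ)⁻¹ := by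
    rw [h, ← mul_assoc, mul_inv_cancel₀ hμ.ne', one_mul, auxF]
  rw [h2, ← intervalIntegral.integral_const_mul]
  congr 1
  ext x
  rw [mul_inv]
  field_simp

/-- Large-`μ` expansion of `∫₀^∞ χ(r) r^{-1} (1 - e^{-rμ}) dr`: the borderline case `α = 1`,
where a logarithmic term `ln μ` appears. -/
theorem stmt_5 (χ : ℝ → ℝ) (hχ : ContDiff ℝ (⊤ : ℕ∞) χ)
    (hχ1 : ∀ r : ℝ, 0 ≤ r → r ≤ 1 / 3 → χ r = 1)
    (hχ0 : ∀ r : ℝ, 2 / 3 ≤ r → χ r = 0) :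
    ∃ C μ₀ : ℝ, 0 < C ∧ 0 < μ₀ ∧ ∀ μ : ℝ, μ₀ ≤ μ →
      |(∫ r in Set.Ioi (0 : ℝ), χ r * r⁻¹ * (1 - Real.exp (-(r * μ)))) -
          (Real.log μ + Real.eulerMascheroniConstant +
            ∫ r in Set.Ioo (0 : ℝ) 1, (χ r - 1) * r⁻¹)|
        ≤ C * Real.exp (-μ / 4) := by
  have hc : Continuous χ := hχ.continuous
  obtain ⟨M, hM⟩ := isCompact_Icc.exists_bound_of_continuousOn (s := Set.Icc (1/3:ℝ) 1)
    (f := fun r => (χ r - 1) * r⁻¹) (by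
      refine ContinuousOn.mul (by fun_prop) (continuousOn_inv₀.mono ?_)
      intro x hx
      have : 0 < x := lt_of_lt_of_le (by norm_num) hx.1
      exact this.ne')
  have hM0 : 0 ≤ M := (norm_nonneg _).trans (hM 1 (by constructor <;> norm_num))
  have hz : ∀ r : ℝ, 0 < r → r < 1/3 → (χ r - 1) * r⁻¹ = 0 := by
    intro r h1 h2
    rw [hχ1 r h1.le h2.le]
    simp
  have hMb : ∀ r ∈ Set.Ioo (0:ℝ) 1, ‖(χ r - 1) * r⁻¹‖ ≤ M := by
    intro r hr
    rcases lt_or_ge r (1/3) with h | h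
    · rw [hz r hr.1 h]
      simpa using hM0
    · exact hM r ⟨h, hr.2.le⟩
  refine ⟨M + 1, 1, by linarith, one_pos, ?_⟩
  intro μ hμ
  have hμ0 : 0 < μ := by linarith
  have hMe : ∀ r ∈ Set.Ioo (0:ℝ) 1, ‖(χ r - 1) * r⁻¹ * Real.exp (-(r * μ))‖
      ≤ M * Real.exp (-μ / 4) := by
    intro r hr
    rcases lt_or_ge r (1/3) with h | h
    · rw [hz r hr.1 h]
      simpa using mul_nonneg hM0 (Real.exp_pos _).le
    · rw [norm_mul, Real.norm_of_nonneg (Real.exp_pos _).le]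
      refine mul_le_mul (hMb r hr) (Real.exp_le_exp.2 ?_) (Real.exp_pos _).le hM0
      nlinarith
  have hmχ : Measurable χ := hc.measurable
  have i1 : IntegrableOn (fun r => (1 - Real.exp (-(r * μ))) * r⁻¹) (Set.Ioo (0:ℝ) 1) := by
    refine Measure.integrableOn_of_bounded (M := μ) (by simp)
      (Measurable.aestronglyMeasurable (by fun_prop)) ?_
    filter_upwards [ae_restrict_mem measurableSet_Ioo] with r hr
    have h := aux_g_bound (r * μ) (mul_pos hr.1 hμ0).le
    have e : (1 - Real.exp (-(r * μ))) * r⁻¹ = μ * ((1 - Real.exp (-(r * μ))) * (r * μ)⁻¹) := by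
      have := hr.1.ne'
      field_simp
    rw [e, norm_mul, Real.norm_of_nonneg hμ0.le]
    nlinarith
  have i2 : IntegrableOn (fun r => (χ r - 1) * r⁻¹) (Set.Ioo (0:ℝ) 1) := by
    refine Measure.integrableOn_of_bounded (M := M) (by simp)
      (Measurable.aestronglyMeasurable (by fun_prop)) ?_
    filter_upwards [ae_restrict_mem measurableSet_Ioo] with r hr using hMb r hr
  have i3 : IntegrableOn (fun r => (χ r - 1) * r⁻¹ * Real.exp (-(r * μ))) (Set.Ioo (0:ℝ) 1) := by
    refine Measure.integrableOn_of_bounded (M := M * Real.exp (-μ / 4)) (by simp)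
      (Measurable.aestronglyMeasurable (by fun_prop)) ?_
    filter_upwards [ae_restrict_mem measurableSet_Ioo] with r hr using hMe r hr
  have hsplit : (∫ r in Set.Ioi (0 : ℝ), χ r * r⁻¹ * (1 - Real.exp (-(r * μ)))) =
      auxF μ + (∫ r in Set.Ioo (0 : ℝ) 1, (χ r - 1) * r⁻¹) -
        ∫ r in Set.Ioo (0 : ℝ) 1, (χ r - 1) * r⁻¹ * Real.exp (-(r * μ)) := by
    rw [setIntegral_eq_of_subset_of_forall_sdiff_eq_zero (s := Set.Ioo (0:ℝ) 1) measurableSet_Ioi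
      Set.Ioo_subset_Ioi_self, ← auxF_scale μ hμ0, ← integral_add i1 i2, ← integral_sub _ i3]
    · congr 1
      ext r
      ring
    · exact i1.add i2
    · intro r hr
      have h1 : 1 ≤ r := by
        by_contra h
        exact hr.2 ⟨hr.1, not_le.1 h⟩
      rw [hχ0 r (by linarith)]
      simp
  have hb3 := norm_setIntegral_le_of_norm_le_const (μ := volume) (by simp) hMe
  rw [Real.norm_eq_abs] at hb3
  simp only [Real.volume_real_Ioo, sub_zero, zero_le_one, sup_of_le_left, mul_one] at hb3
  have hb1 := auxG_bound μ hμ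
  have hexp : Real.exp (-μ) ≤ Real.exp (-μ / 4) := Real.exp_le_exp.2 (by linarith)
  rw [hsplit]
  rw [abs_le] at *
  constructor <;> linarith [hb1.1, hb1.2, hb3.1, hb3.2]
end

section
/- Let μ > 0 be a fixed real number and let γ denote the Euler–Mascheroni constant. Then the limit as α → 1 (over complex α ≠ 1) of 1/(1−α) − μ^{α−1} Γ(1−α) equals ln μ + γ. -/
open Filter Real Complex

/-- As `α → 1` (over complex `α ≠ 1`), `1/(1-α) - μ^{α-1} Γ(1-α) → ln μ + γ`. -/
theorem stmt_6 (μ : ℝ) (hμ : 0 < μ) :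
    Filter.Tendsto
      (fun α : ℂ =>
        1 / (1 - α) - Complex.exp ((α - 1) * (Real.log μ : ℂ)) * Complex.Gamma (1 - α))
      (nhdsWithin 1 {(1 : ℂ)}ᶜ)
      (nhds ((Real.log μ : ℂ) + (Real.eulerMascheroniConstant : ℂ))) := by
  have hG : HasDerivAt (fun α : ℂ => Complex.Gamma (2 - α))
      (Real.eulerMascheroniConstant : ℂ) 1 := by
    have h1 : HasDerivAt (fun α : ℂ => 2 - α) (-1) 1 := by
      simpa using (hasDerivAt_id (1 : ℂ)).const_sub 2
    have h2 : HasDerivAt Complex.Gamma (-(Real.eulerMascheroniConstant : ℂ)) (2 - 1) := by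
      have h3 : (2 - 1 : ℂ) = 1 := by norm_num
      rw [h3]
      exact Complex.hasDerivAt_Gamma_one
    have h4 := HasDerivAt.comp (1 : ℂ) h2 h1
    simpa [Function.comp_def] using h4
  have hE : HasDerivAt (fun α : ℂ => Complex.exp ((α - 1) * (Real.log μ : ℂ)))
      (Real.log μ : ℂ) 1 := by
    have h1 := (((hasDerivAt_id (1 : ℂ)).sub_const 1).mul_const (Real.log μ : ℂ)).cexp
    simpa using h1
  have h21 : (2 - 1 : ℂ) = 1 := by norm_num
  have hF := (hE.mul hG).tendsto_slope
  simp only [sub_self, zero_mul, Complex.exp_zero, h21, Complex.Gamma_one, mul_one, one_mul] at hF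
  refine hF.congr' ?_
  filter_upwards [self_mem_nhdsWithin] with α hα
  have hne : α ≠ 1 := hα
  have ha : 1 - α ≠ 0 := sub_ne_zero.mpr hne.symm
  have hb : α - 1 ≠ 0 := sub_ne_zero.mpr hne
  have hrec : Complex.Gamma (2 - α) = (1 - α) * Complex.Gamma (1 - α) := by
    rw [← Complex.Gamma_add_one _ ha]
    congr 1
    ring
  simp only [slope_def_field, Pi.mul_apply, hrec, h21, sub_self, zero_mul, Complex.exp_zero,
    Complex.Gamma_one, mul_one]
  rw [div_eq_iff hb]
  field_simp
  ring
end

section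
/- Define erf(x) := (2/√π) ∫₀^x e^{−v²} dv for x ≥ 0. Let α ∈ ℂ with Re(α) < 1. Then ∫₀^∞ (1 − erf(s)) s^{−α} ds = Γ((2−α)/2) / ((1−α)·√π). -/
open MeasureTheory Real intervalIntegral

open Set Filter Topology in
/-- For `Re α < 1`, `∫₀^∞ (1 - erf s) s^{-α} ds = Γ((2-α)/2)/((1-α)√π)`,
where `erf x = (2/√π) ∫₀^x e^{-v²} dv`. -/
theorem stmt_8 (erf : ℝ → ℝ)
    (herf : ∀ x : ℝ, 0 ≤ x → erf x = (2 / Real.sqrt π) * ∫ v in (0 : ℝ)..x, Real.exp (-v ^ 2))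
    (α : ℂ) (hα : α.re < 1) :
    ∫ s in Set.Ioi (0 : ℝ), ((1 - erf s : ℝ) : ℂ) * (s : ℂ) ^ (-α) =
      Complex.Gamma ((2 - α) / 2) / ((1 - α) * (Real.sqrt π : ℂ)) := by
  have hsp : 0 < Real.sqrt π := Real.sqrt_pos.2 Real.pi_pos
  have hne : (1 - α) ≠ 0 := by
    intro h
    have := congrArg Complex.re h
    simp at this
    linarith
  have hgi : Integrable (fun v : ℝ => Real.exp (-v ^ 2)) := by
    simpa using integrable_exp_neg_mul_sq (b := 1) one_pos
  have hcont : Continuous (fun v : ℝ => Real.exp (-v ^ 2)) := by fun_prop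
  have hle : ∀ v : ℝ, Real.exp (-v ^ 2) ≤ Real.exp 1 * Real.exp (-v) := by
    intro v
    rw [← Real.exp_add]
    apply Real.exp_le_exp.2
    nlinarith [sq_nonneg (v - 1 / 2)]
  have hhalf : ∫ v in Ioi (0 : ℝ), Real.exp (-v ^ 2) = Real.sqrt π / 2 := by
    simpa using integral_gaussian_Ioi 1
  set F : ℝ → ℝ := fun s => 1 - (2 / Real.sqrt π) * ∫ v in (0 : ℝ)..s, Real.exp (-v ^ 2) with hF
  have hFtail : ∀ s, 0 ≤ s → F s = (2 / Real.sqrt π) * ∫ v in Ioi s, Real.exp (-v ^ 2) := by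
    intro s hs
    have := intervalIntegral.integral_interval_add_Ioi (a := 0) (b := s) (μ := volume)
      (hgi.integrableOn) (hgi.integrableOn)
    rw [hhalf] at this
    have h2 : ∫ v in Ioi s, Real.exp (-v ^ 2) =
      Real.sqrt π / 2 - ∫ v in (0 : ℝ)..s, Real.exp (-v ^ 2) := by linarith
    rw [h2, hF]
    field_simp
  have hexpi : ∀ s : ℝ, IntegrableOn (fun v : ℝ => Real.exp 1 * Real.exp (-v)) (Ioi s) := by
    intro s
    exact (integrableOn_exp_neg_Ioi s).const_mul _
  set C : ℝ := (2 / Real.sqrt π) * Real.exp 1 with hC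
  have hCpos : 0 < C := by positivity
  have hFnn : ∀ s, 0 ≤ s → 0 ≤ F s := by
    intro s hs
    rw [hFtail s hs]
    have : 0 ≤ ∫ v in Ioi s, Real.exp (-v ^ 2) := integral_nonneg fun v => (Real.exp_pos _).le
    positivity
  have hFle : ∀ s, 0 ≤ s → F s ≤ C * Real.exp (-s) := by
    intro s hs
    rw [hFtail s hs, hC, mul_assoc]
    refine mul_le_mul_of_nonneg_left ?_ (by positivity)
    calc _ ≤ ∫ v in Ioi s, Real.exp 1 * Real.exp (-v) :=
          integral_mono hgi.integrableOn (hexpi s) hle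
      _ = _ := by rw [MeasureTheory.integral_const_mul, integral_exp_neg_Ioi]
  have hFd : ∀ s, HasDerivAt F (-((2 / Real.sqrt π) * Real.exp (-s ^ 2))) s := by
    intro s
    have := intervalIntegral.integral_hasDerivAt_right (a := 0) (b := s)
      (hcont.intervalIntegrable _ _) (hcont.stronglyMeasurableAtFilter _ _) hcont.continuousAt
    simpa using (this.const_mul (2 / Real.sqrt π)).const_sub 1
  have hFc : Continuous F := continuous_iff_continuousAt.2 fun s => (hFd s).continuousAt
  -- general integrability
  have hIntegr : ∀ (β : ℂ) (g : ℝ → ℝ) (K : ℝ), -1 < β.re → Continuous g →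
      (∀ s, 0 ≤ s → |g s| ≤ K * Real.exp (-s)) →
      IntegrableOn (fun s : ℝ => (g s : ℂ) * (s : ℂ) ^ β) (Ioi 0) := by
    intro β g K hβ hg hb
    have h1 : IntegrableOn (fun s : ℝ => K * (Real.exp (-s) * s ^ β.re)) (Ioi 0) := by
      have := Real.GammaIntegral_convergent (s := β.re + 1) (by linarith)
      simpa [IntegrableOn] using this.const_mul K
    refine Integrable.mono' h1 ?_ ?_
    · refine ContinuousOn.aestronglyMeasurable ?_ measurableSet_Ioi
      refine ContinuousOn.mul (by fun_prop) ?_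
      intro s hs
      exact (Complex.continuousAt_ofReal_cpow_const s β (Or.inr (ne_of_gt hs))).continuousWithinAt
    · filter_upwards [ae_restrict_mem measurableSet_Ioi] with s hs
      rw [norm_mul, Complex.norm_real, Complex.norm_cpow_eq_rpow_re_of_pos hs, ← mul_assoc]
      exact mul_le_mul_of_nonneg_right (hb s (le_of_lt hs)) (Real.rpow_nonneg (le_of_lt hs) _)
  have hI1 : IntegrableOn (fun s : ℝ => (F s : ℂ) * (s : ℂ) ^ (-α)) (Ioi 0) := by
    refine hIntegr (-α) F C (by simpa using hα) hFc ?_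
    intro s hs
    rw [abs_of_nonneg (hFnn s hs)]
    exact hFle s hs
  have hI2 : IntegrableOn (fun s : ℝ => (Real.exp (-s ^ 2) : ℂ) * (s : ℂ) ^ (1 - α)) (Ioi 0) := by
    refine hIntegr (1 - α) (fun s => Real.exp (-s ^ 2)) (Real.exp 1) (by simp; linarith) hcont ?_
    intro s hs
    rw [abs_of_nonneg (Real.exp_pos _).le]
    exact hle s
  have hcpos : (0 : ℝ) < (1 - α).re := by simpa using hα
  -- the Gamma integral
  have hG : ∫ s in Ioi (0 : ℝ), (Real.exp (-s ^ 2) : ℂ) * (s : ℂ) ^ (1 - α) =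
      Complex.Gamma ((2 - α) / 2) / 2 := by
    have h1 := mellin_comp_rpow (fun x : ℝ => (Real.exp (-x) : ℂ)) (2 - α) 2
    have h3 : 0 < ((2 - α) / 2).re := by
      have : ((2 - α) / 2).re = (2 - α.re) / 2 := by simp
      rw [this]; linarith
    have h2 := Complex.GammaIntegral_eq_mellin
    rw [Complex.Gamma_eq_integral h3, h2]
    have h4 : mellin (fun t : ℝ => (Real.exp (-(t ^ (2:ℝ))) : ℂ)) (2 - α) =
        ∫ s in Ioi (0 : ℝ), (Real.exp (-s ^ 2) : ℂ) * (s : ℂ) ^ (1 - α) := by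
      unfold mellin
      congr 1
      ext t
      simp only [smul_eq_mul, Real.rpow_two]
      rw [mul_comm]
      congr 2
      ring
    rw [← h4, h1]
    simp
    ring
  have hmain := integral_Ioi_mul_deriv_eq_deriv_mul (a := 0) (a' := (0:ℂ)) (b' := (0:ℂ))
    (u := fun s : ℝ => (F s : ℂ)) (u' := fun s => ((-((2 / Real.sqrt π) * Real.exp (-s ^ 2)) : ℝ) : ℂ))
    (v := fun s : ℝ => (s : ℂ) ^ (1 - α) / (1 - α)) (v' := fun s : ℝ => (s : ℂ) ^ (-α))
    (fun s _ => (hFd s).ofReal_comp)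
    (by
      intro s hs
      have := (hasDerivAt_ofReal_cpow_const (x := s) (ne_of_gt hs) hne).div_const (1 - α)
      rw [show 1 - α - 1 = -α by ring, mul_div_cancel_left₀ _ hne] at this
      exact this)
    hI1
    (by
      refine (hI2.const_mul (-(2 / (Real.sqrt π : ℂ)) / (1 - α))).congr (ae_of_all _ fun s => ?_)
      simp only [Pi.mul_apply]
      push_cast
      ring)
    (by
      have : ContinuousAt (fun s : ℝ => (F s : ℂ) * ((s : ℂ) ^ (1 - α) / (1 - α))) 0 := by
        refine ContinuousAt.mul (by fun_prop) (ContinuousAt.div_const ?_ _)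
        exact Complex.continuousAt_ofReal_cpow_const 0 _ (Or.inl hcpos)
      have h := this.tendsto
      simp only [Complex.ofReal_zero, Complex.zero_cpow hne, zero_div, mul_zero] at h
      exact h.mono_left nhdsWithin_le_nhds)
    (by
      have ht := (tendsto_rpow_mul_exp_neg_mul_atTop_nhds_zero (1 - α).re 1 one_pos).const_mul
        (C / ‖1 - α‖)
      rw [mul_zero] at ht
      refine squeeze_zero_norm' ?_ ht
      filter_upwards [eventually_gt_atTop 0] with s hs
      simp only [Pi.mul_apply]
      rw [norm_mul, norm_div, Complex.norm_real, Complex.norm_cpow_eq_rpow_re_of_pos hs,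
        Real.norm_of_nonneg (hFnn s hs.le)]
      have := mul_le_mul_of_nonneg_right (hFle s hs.le)
        (show 0 ≤ s ^ (1 - α).re / ‖1 - α‖ by positivity)
      refine this.trans (le_of_eq ?_)
      rw [neg_one_mul]
      ring)
  have hL : ∫ s in Set.Ioi (0 : ℝ), ((1 - erf s : ℝ) : ℂ) * (s : ℂ) ^ (-α) =
      ∫ s in Set.Ioi (0 : ℝ), (F s : ℂ) * (s : ℂ) ^ (-α) := by
    refine setIntegral_congr_fun measurableSet_Ioi fun s hs => ?_
    simp only [hF, herf s (le_of_lt hs)]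
  have hR : ∫ s in Ioi (0 : ℝ), ((-((2 / Real.sqrt π) * Real.exp (-s ^ 2)) : ℝ) : ℂ) *
      ((s : ℂ) ^ (1 - α) / (1 - α)) =
      (-(2 / (Real.sqrt π : ℂ)) / (1 - α)) * (Complex.Gamma ((2 - α) / 2) / 2) := by
    rw [← hG, ← MeasureTheory.integral_const_mul]
    congr 1
    ext s
    push_cast
    ring
  rw [hL, hmain, hR]
  have hspc : (Real.sqrt π : ℂ) ≠ 0 := by exact_mod_cast hsp.ne'
  field_simp
  ring
end

section
/- Define erf(x) := (2/√π) ∫₀^x e^{−v²} dv for x ≥ 0. Let t > 0 be real and let α ∈ ℂ with Re(α) < 1. Then ∫₀^∞ (1 − erf(r/(2√t))) r^{−α} dr = t^{(1−α)/2} · Γ(1−α) / Γ((3−α)/2). -/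
open MeasureTheory Real intervalIntegral

lemma aux_gint : Integrable (fun v : ℝ => Real.exp (-v ^ 2)) := by
  have := integrable_exp_neg_mul_sq (b := 1) one_pos
  simpa using this

lemma aux_exp_le (v : ℝ) : Real.exp (-v ^ 2) ≤ Real.exp 1 * Real.exp (-v) := by
  rw [← Real.exp_add]
  apply Real.exp_le_exp.2
  nlinarith [sq_nonneg (v - 1), sq_nonneg v]

noncomputable def auxG (x : ℝ) : ℝ := √π / 2 - ∫ v in (0 : ℝ)..x, Real.exp (-v ^ 2)

lemma auxG_eq (x : ℝ) : auxG x = ∫ v in Set.Ioi x, Real.exp (-v ^ 2) := by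
  have h := intervalIntegral.integral_interval_add_Ioi (a := 0) (b := x)
    aux_gint.integrableOn aux_gint.integrableOn
  have h2 := integral_gaussian_Ioi 1
  simp only [neg_mul, one_mul, div_one] at h2
  rw [h2] at h
  unfold auxG
  linarith

lemma auxG_nonneg (x : ℝ) : 0 ≤ auxG x := by
  rw [auxG_eq]
  exact integral_nonneg fun v => (Real.exp_pos _).le

lemma auxG_le (x : ℝ) : auxG x ≤ Real.exp 1 * Real.exp (-x) := by
  rw [auxG_eq, ← integral_exp_neg_Ioi x, ← MeasureTheory.integral_const_mul]
  refine integral_mono aux_gint.integrableOn ?_ aux_exp_le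
  exact (integrableOn_exp_neg_Ioi x).const_mul _

lemma auxG_deriv_s9 (x : ℝ) : HasDerivAt auxG (-Real.exp (-x ^ 2)) x := by
  have hc : Continuous (fun v : ℝ => Real.exp (-v ^ 2)) := by fun_prop
  exact (hc.integral_hasStrictDerivAt 0 x).hasDerivAt.const_sub _

lemma aux_integrable (f : ℝ → ℝ) (hf : Continuous f) (h0 : ∀ x, 0 ≤ f x)
    (h1 : ∀ x, f x ≤ Real.exp 1 * Real.exp (-x)) (s : ℂ) (hs : 0 < s.re) :
    IntegrableOn (fun x : ℝ => (f x : ℂ) * (x : ℂ) ^ (s - 1)) (Set.Ioi 0) := by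
  refine Integrable.mono' ((Real.GammaIntegral_convergent hs).const_mul (Real.exp 1)) ?_ ?_
  · refine ContinuousOn.aestronglyMeasurable ?_ measurableSet_Ioi
    intro x hx
    refine ContinuousAt.continuousWithinAt ?_
    refine ContinuousAt.mul (by fun_prop) ?_
    exact Complex.continuousAt_ofReal_cpow_const x _ (Or.inr (ne_of_gt hx))
  · refine (ae_restrict_iff' measurableSet_Ioi).2 (Filter.Eventually.of_forall fun x hx => ?_)
    rw [norm_mul, Complex.norm_real, Complex.norm_cpow_eq_rpow_re_of_pos hx,
      Real.norm_of_nonneg (h0 x), ← mul_assoc]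
    simp only [Complex.sub_re, Complex.one_re]
    exact mul_le_mul_of_nonneg_right (h1 x) (Real.rpow_nonneg (le_of_lt hx) _)

lemma aux_gauss (s : ℂ) (hs : 0 < s.re) :
    ∫ x in Set.Ioi (0 : ℝ), ((Real.exp (-x ^ 2) : ℝ) : ℂ) * (x : ℂ) ^ s =
      Complex.Gamma ((s + 1) / 2) / 2 := by
  have h := mellin_comp_rpow (fun x : ℝ => ((Real.exp (-x) : ℝ) : ℂ)) (s + 1) 2
  rw [← Complex.GammaIntegral_eq_mellin, show ((2 : ℝ) : ℂ) = 2 by norm_num,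
    ← Complex.Gamma_eq_integral (by simp; linarith)] at h
  rw [mellin] at h
  simp only [add_sub_cancel_right, smul_eq_mul, Real.rpow_two] at h
  calc _ = _ := by
        refine integral_congr_ae (Filter.Eventually.of_forall fun x => ?_)
        exact mul_comm _ _
    _ = _ := h
    _ = _ := by simp; ring

lemma aux_parts (s : ℂ) (hs : 0 < s.re) :
    ∫ x in Set.Ioi (0 : ℝ), (auxG x : ℂ) * (x : ℂ) ^ (s - 1) =
      Complex.Gamma ((s + 1) / 2) / (2 * s) := by
  have hs0 : s ≠ 0 := by rintro rfl; simp at hs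
  have hGc : Continuous auxG := continuous_iff_continuousAt.2 fun x => (auxG_deriv_s9 x).continuousAt
  have hb : ∀ x : ℝ, 0 < x → ‖(auxG x : ℂ) * ((x : ℂ) ^ s / s)‖ ≤
      Real.exp 1 / ‖s‖ * (x ^ s.re * Real.exp (-1 * x)) := by
    intro x hx
    rw [norm_mul, norm_div, Complex.norm_real, Complex.norm_cpow_eq_rpow_re_of_pos hx,
      Real.norm_of_nonneg (auxG_nonneg x)]
    have := mul_le_mul_of_nonneg_right (auxG_le x)
      (div_nonneg (Real.rpow_nonneg hx.le s.re) (norm_nonneg s))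
    refine this.trans (le_of_eq ?_)
    rw [neg_one_mul]; ring
  have key := integral_Ioi_mul_deriv_eq_deriv_mul (a := 0) (a' := (0 : ℂ)) (b' := 0)
    (u := fun x : ℝ => (auxG x : ℂ)) (v := fun x : ℝ => (x : ℂ) ^ s / s)
    (u' := fun x : ℝ => ((-Real.exp (-x ^ 2) : ℝ) : ℂ)) (v' := fun x : ℝ => (x : ℂ) ^ (s - 1))
    (fun x _ => (auxG_deriv_s9 x).ofReal_comp) ?_ ?_ ?_ ?_ ?_
  · rw [key]
    have h2 := aux_gauss s hs
    calc _ = -∫ x in Set.Ioi (0 : ℝ), -(((Real.exp (-x ^ 2) : ℝ) : ℂ) * (x : ℂ) ^ s) / s := by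
          rw [sub_zero, zero_sub]
          congr 1
          refine integral_congr_ae (Filter.Eventually.of_forall fun x => ?_)
          push_cast
          ring
      _ = _ := by
          rw [MeasureTheory.integral_div, MeasureTheory.integral_neg, h2]
          field_simp
  · intro x hx
    have := (hasDerivAt_ofReal_cpow_const (x := x) (ne_of_gt hx) hs0).div_const s
    rwa [mul_div_cancel_left₀ _ hs0] at this
  · exact aux_integrable auxG hGc auxG_nonneg auxG_le s hs
  · have := aux_integrable (fun x => Real.exp (-x ^ 2)) (by fun_prop)
      (fun x => (Real.exp_pos _).le) aux_exp_le (s + 1) (by simp; linarith)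
    refine (this.const_mul (-1 / s)).congr (Filter.Eventually.of_forall fun x => ?_)
    simp only [add_sub_cancel_right, Pi.mul_apply]
    push_cast
    ring
  · refine squeeze_zero_norm' (a := fun x : ℝ => Real.exp 1 / ‖s‖ * (x ^ s.re * Real.exp (-1 * x)))
      ?_ ?_
    · filter_upwards [self_mem_nhdsWithin] with x hx using hb x hx
    · have : ContinuousAt (fun x : ℝ => Real.exp 1 / ‖s‖ * (x ^ s.re * Real.exp (-1 * x))) 0 := by
        refine ContinuousAt.mul continuousAt_const (ContinuousAt.mul ?_ (by fun_prop))
        exact Real.continuousAt_rpow_const 0 s.re (Or.inr hs.le)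
      have h := this.tendsto
      simp only [Real.zero_rpow hs.ne', zero_mul, mul_zero] at h
      exact h.mono_left nhdsWithin_le_nhds
  · refine squeeze_zero_norm' (a := fun x : ℝ => Real.exp 1 / ‖s‖ * (x ^ s.re * Real.exp (-1 * x)))
      ?_ ?_
    · filter_upwards [Filter.eventually_gt_atTop 0] with x hx using hb x hx
    · simpa using (tendsto_rpow_mul_exp_neg_mul_atTop_nhds_zero s.re 1 one_pos).const_mul
        (Real.exp 1 / ‖s‖)

/-- For `t > 0` and `Re α < 1`,
`∫₀^∞ (1 - erf(r/(2√t))) r^{-α} dr = t^{(1-α)/2} Γ(1-α)/Γ((3-α)/2)`. -/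
theorem stmt_9 (erf : ℝ → ℝ)
    (herf : ∀ x : ℝ, 0 ≤ x → erf x = (2 / Real.sqrt π) * ∫ v in (0 : ℝ)..x, Real.exp (-v ^ 2))
    (t : ℝ) (ht : 0 < t) (α : ℂ) (hα : α.re < 1) :
    ∫ r in Set.Ioi (0 : ℝ), ((1 - erf (r / (2 * Real.sqrt t)) : ℝ) : ℂ) * (r : ℂ) ^ (-α) =
      Complex.exp (((1 - α) / 2) * (Real.log t : ℂ)) *
        Complex.Gamma (1 - α) / Complex.Gamma ((3 - α) / 2) := by
  obtain ⟨s, rfl⟩ : ∃ s, α = 1 - s := ⟨1 - α, by ring⟩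
  have hs : 0 < s.re := by simpa using hα
  have hs0 : s ≠ 0 := by rintro rfl; simp at hs
  have hpi : √π ≠ 0 := (Real.sqrt_pos.2 Real.pi_pos).ne'
  have hc : 0 < 2 * √t := by positivity
  have e1 : (3 - (1 - s)) / 2 = s / 2 + 1 := by ring
  rw [show 1 - (1 - s) = s by ring, e1, show -(1 - s) = s - 1 by ring]
  have hm := mellin_comp_mul_left (fun x : ℝ => (auxG x : ℂ)) s (a := (2 * √t)⁻¹) (by positivity)
  have hp := aux_parts s hs
  have hm1 : mellin (fun x : ℝ => (auxG x : ℂ)) s = Complex.Gamma ((s + 1) / 2) / (2 * s) := by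
    rw [← hp, mellin]
    simp only [smul_eq_mul, mul_comm]
  rw [hm1, mellin] at hm
  have hL : ∫ r in Set.Ioi (0 : ℝ), ((1 - erf (r / (2 * Real.sqrt t)) : ℝ) : ℂ) * (r : ℂ) ^ (s - 1)
      = (2 / √π : ℂ) * ((((2 * √t)⁻¹ : ℝ) : ℂ) ^ (-s) • (Complex.Gamma ((s + 1) / 2) / (2 * s))) := by
    rw [← hm, ← MeasureTheory.integral_const_mul]
    refine setIntegral_congr_fun measurableSet_Ioi fun r hr => ?_
    have hr : 0 < r := hr
    have : 1 - erf (r / (2 * √t)) = 2 / √π * auxG ((2 * √t)⁻¹ * r) := by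
      rw [herf _ (by positivity), auxG, show (2 * √t)⁻¹ * r = r / (2 * √t) by ring]
      field_simp
    simp only [this, smul_eq_mul]
    push_cast
    ring
  have hpow : (((2 * √t)⁻¹ : ℝ) : ℂ) ^ (-s) = 2 ^ s * Complex.exp (s / 2 * (Real.log t : ℂ)) := by
    rw [Complex.cpow_def_of_ne_zero (by exact_mod_cast (inv_pos.2 hc).ne'),
      Complex.cpow_def_of_ne_zero two_ne_zero, ← Complex.ofReal_log (inv_pos.2 hc).le,
      ← Complex.exp_add, Real.log_inv, Real.log_mul two_ne_zero (Real.sqrt_pos.2 ht).ne',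
      Real.log_sqrt ht.le]
    congr 1
    rw [show Complex.log 2 = ((Real.log 2 : ℝ) : ℂ) by
      rw [Complex.ofReal_log zero_le_two]; norm_num]
    push_cast
    ring
  have hd := Complex.Gamma_mul_Gamma_add_half (s / 2)
  rw [show s / 2 + 1 / 2 = (s + 1) / 2 by ring, show 2 * (s / 2) = s by ring,
    Complex.cpow_sub _ _ two_ne_zero, Complex.cpow_one] at hd
  have hg : Complex.Gamma (s / 2) ≠ 0 := Complex.Gamma_ne_zero_of_re_pos (by
    rw [Complex.div_ofNat_re]; linarith)
  have h2 : (2 : ℂ) ^ s ≠ 0 := by simp [Complex.cpow_eq_zero_iff]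
  have hpiC : (√π : ℂ) ≠ 0 := by exact_mod_cast hpi
  rw [hL, hpow, Complex.Gamma_add_one _ (by simpa using hs0), smul_eq_mul]
  field_simp at hd ⊢
  linear_combination hd
end

section
/- Let α ∈ ℂ with Re(α) < 2 and α ≠ 1, and let g : [0,∞) → ℂ be continuously differentiable with compact support. Then the limit as ε → 0⁺ of ∫_ε^∞ g(r) r^{−α} dr − g(0)·ε^{1−α}/(α−1) exists and equals g(0)/(1−α) + ∫₀^∞ (g(r) − g(0)·𝟙_{[0,1]}(r)) r^{−α} dr. -/
open MeasureTheory Real Filter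

lemma aux_int (α : ℂ) (g : ℝ → ℂ) (hg : Continuous g) (hgsupp : HasCompactSupport g)
    (ε : ℝ) (hε : 0 < ε) : IntegrableOn (fun r : ℝ => g r * (r : ℂ) ^ (-α)) (Set.Ioi ε) := by
  obtain ⟨R, hR⟩ := hgsupp.isCompact.bddAbove
  have h1 : IntegrableOn (fun r : ℝ => g r * (r : ℂ) ^ (-α)) (Set.Icc ε R) := by
    apply ContinuousOn.integrableOn_Icc
    intro r hr
    have hr0 : 0 < r := lt_of_lt_of_le hε hr.1
    exact (hg.continuousAt.mul
      (Complex.continuousAt_ofReal_cpow_const r (-α) (Or.inr hr0.ne'))).continuousWithinAt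
  refine h1.of_forall_diff_eq_zero measurableSet_Ioi ?_
  intro r hr
  have : g r = 0 := by
    apply image_eq_zero_of_notMem_tsupport
    intro h
    exact hr.2 ⟨le_of_lt hr.1, hR h⟩
  simp [this]

lemma aux_int0 (α : ℂ) (hα : α.re < 2)
    (g : ℝ → ℂ) (hg : ContDiff ℝ 1 g) (hgsupp : HasCompactSupport g) :
    IntegrableOn (fun r : ℝ => (g r - g 0 * (Set.Icc (0 : ℝ) 1).indicator (fun _ => (1 : ℂ)) r) *
            (r : ℂ) ^ (-α)) (Set.Ioi 0) := by
  rw [← Set.Ioc_union_Ioi_eq_Ioi (zero_le_one (α := ℝ))]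
  refine IntegrableOn.union ?_ ?_
  · obtain ⟨C, hC⟩ := hg.lipschitzWith_of_hasCompactSupport hgsupp one_ne_zero
    have hb : IntegrableOn (fun r : ℝ => (C : ℝ) * r ^ (1 - α.re)) (Set.Ioc 0 1) := by
      have := (intervalIntegral.intervalIntegrable_rpow' (a := 0) (b := 1)
        (r := 1 - α.re) (by linarith)).const_mul (C : ℝ)
      rwa [intervalIntegrable_iff_integrableOn_Ioc_of_le zero_le_one] at this
    have he : IntegrableOn (fun r : ℝ => (g r - g 0) * (r : ℂ) ^ (-α)) (Set.Ioc 0 1) := by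
      refine Integrable.mono' hb ?_ ?_
      · refine ContinuousOn.aestronglyMeasurable ?_ measurableSet_Ioc
        intro r hr
        exact ((hg.continuous.continuousAt.sub continuousAt_const).mul
          (Complex.continuousAt_ofReal_cpow_const r (-α) (Or.inr hr.1.ne'))).continuousWithinAt
      · refine (ae_restrict_iff' measurableSet_Ioc).2 (Eventually.of_forall fun r hr => ?_)
        have h1 := hC.dist_le_mul r 0
        rw [dist_eq_norm, dist_zero_right, Real.norm_of_nonneg hr.1.le] at h1
        rw [norm_mul, Complex.norm_cpow_eq_rpow_re_of_pos hr.1, Complex.neg_re,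
          sub_eq_add_neg, sub_eq_add_neg, Real.rpow_add hr.1, Real.rpow_one, ← mul_assoc,
          ← sub_eq_add_neg]
        exact mul_le_mul_of_nonneg_right h1 (Real.rpow_nonneg hr.1.le _)
    refine he.congr_fun (fun r hr => ?_) measurableSet_Ioc
    simp [Set.indicator_of_mem (Set.Ioc_subset_Icc_self hr)]
  · refine (aux_int α g hg.continuous hgsupp 1 one_pos).congr_fun (fun r hr => ?_) measurableSet_Ioi
    have : r ∉ Set.Icc (0 : ℝ) 1 := fun h => not_lt.2 h.2 hr
    simp [Set.indicator_of_notMem this]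

/-- The regularized integral `I_Reg` for a density with `r^{-α}` blowup, `Re α < 2`, `α ≠ 1`:
`lim_{ε→0⁺} (∫_ε^∞ g(r) r^{-α} dr - g(0) ε^{1-α}/(α-1))
   = g(0)/(1-α) + ∫₀^∞ (g(r) - g(0) 𝟙_{[0,1]}(r)) r^{-α} dr`. -/
theorem stmt_16 (α : ℂ) (hα : α.re < 2) (hα1 : α ≠ 1)
    (g : ℝ → ℂ) (hg : ContDiff ℝ 1 g) (hgsupp : HasCompactSupport g) :
    Filter.Tendsto
      (fun ε : ℝ =>
        (∫ r in Set.Ioi ε, g r * (r : ℂ) ^ (-α)) -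
          g 0 * Complex.exp ((1 - α) * (Real.log ε : ℂ)) / (α - 1))
      (nhdsWithin 0 (Set.Ioi 0))
      (nhds (g 0 / (1 - α) +
        ∫ r in Set.Ioi (0 : ℝ),
          (g r - g 0 * (Set.Icc (0 : ℝ) 1).indicator (fun _ => (1 : ℂ)) r) *
            (r : ℂ) ^ (-α))) := by
  have h0 := aux_int0 α hα g hg hgsupp
  set h : ℝ → ℂ := fun r : ℝ =>
    (g r - g 0 * (Set.Icc (0 : ℝ) 1).indicator (fun _ => (1 : ℂ)) r) * (r : ℂ) ^ (-α) with hh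
  have hid : Tendsto (fun ε : ℝ => ε) (nhdsWithin 0 (Set.Ioi 0)) (nhds (0 : ℝ)) :=
    tendsto_id.mono_left nhdsWithin_le_nhds
  have hT := (aecover_Ioi_of_Ioi (μ := volume) hid).integral_tendsto_of_countably_generated h0
  refine (hT.const_add (g 0 / (1 - α))).congr' ?_
  filter_upwards [Ioo_mem_nhdsGT (zero_lt_one (α := ℝ))] with ε hε
  have hε0 : 0 < ε := hε.1
  rw [Measure.restrict_restrict measurableSet_Ioi,
    Set.inter_eq_left.2 (Set.Ioi_subset_Ioi hε0.le)]
  have hF := aux_int α g hg.continuous hgsupp ε hε0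
  have hH : IntegrableOn h (Set.Ioi ε) := h0.mono_set (Set.Ioi_subset_Ioi hε0.le)
  have hsub : (∫ r in Set.Ioi ε, g r * (r : ℂ) ^ (-α)) - ∫ r in Set.Ioi ε, h r
      = ∫ r in Set.Ioi ε, (Set.Ioc ε 1).indicator (fun r : ℝ => g 0 * (r : ℂ) ^ (-α)) r := by
    rw [← integral_sub hF hH]
    refine setIntegral_congr_fun measurableSet_Ioi fun r hr => ?_
    have hr' : ε < r := hr
    by_cases h1 : r ≤ 1
    · have m1 : r ∈ Set.Icc (0 : ℝ) 1 := ⟨(hε0.trans hr').le, h1⟩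
      have m2 : r ∈ Set.Ioc ε 1 := ⟨hr', h1⟩
      simp only [hh, Set.indicator_of_mem m1, Set.indicator_of_mem m2]
      ring
    · have m1 : r ∉ Set.Icc (0 : ℝ) 1 := fun h => h1 h.2
      have m2 : r ∉ Set.Ioc ε 1 := fun h => h1 h.2
      simp only [hh, Set.indicator_of_notMem m1, Set.indicator_of_notMem m2]
      ring
  rw [setIntegral_indicator measurableSet_Ioc, Set.inter_eq_right.2 Set.Ioc_subset_Ioi_self,
    integral_const_mul, ← intervalIntegral.integral_of_le hε.2.le, integral_cpow] at hsub
  · have hexp : Complex.exp ((1 - α) * (Real.log ε : ℂ)) = (ε : ℂ) ^ (-α + 1) := by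
      rw [Complex.cpow_def_of_ne_zero (by exact_mod_cast hε0.ne'), Complex.ofReal_log hε0.le]
      congr 1
      ring
    rw [hexp, sub_eq_iff_eq_add.1 hsub]
    have e1 : α - 1 = -(1 - α) := by ring
    have e2 : -α + 1 = 1 - α := by ring
    have e3 : (1 - α) ≠ 0 := sub_ne_zero.2 (Ne.symm hα1)
    rw [e1, e2]
    simp only [Complex.ofReal_one, Complex.one_cpow]
    field_simp
    ring
  · right
    refine ⟨fun hc => hα1 (neg_injective hc), ?_⟩
    rw [Set.uIcc_of_le hε.2.le]
    exact fun hc => not_lt.2 hc.1 hε0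
end
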